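/- arXiv:1103.3923 — 2 statements merged into one kernel-verified Lean document; each statement's English description precedes it below -/
import Mathlib

section
/- Let C be a monoidal category, L : C → D a localization functor at a class W of morphisms, and suppose that for every w : X → Y in W and every object Z, the morphisms w ⊗ id_Z and id_Z ⊗ w are in W. Then D inherits a monoidal structure making L a monoidal functor, and this structure is unique up to monoidal equivalence. -/
open CategoryTheory MonoidalCategory

/-!
The class of all morphisms inverted by a localization functor `L` at `W` has the same localization
as `W`, and every functor inverting `W` inverts it too. Applied to the functors
`L (Z ⊗ -)` and `L (- ⊗ Z)`, this makes the class stable under whiskering, so the tensor product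
descends along `L`. For uniqueness, a functor `F` out of `D` is determined by `L ⋙ F`, so the
tensorator of a monoidal structure on `L ⋙ F` descends to one on `F`; take `F = 𝟭 D`.
-/

section Saturation

variable {C D : Type*} [Category* C] [Category* D] (L : C ⥤ D)

theorem isLocalization_of_le_of_isInvertedBy (W : MorphismProperty C) [L.IsLocalization W]
    {W' : MorphismProperty C} (hle : W ≤ W') (hinv : W'.IsInvertedBy L) :
    L.IsLocalization W' :=
  .of_equivalence_source L W L W' .refl (hle.trans W'.le_isoClosure) hinv L.leftUnitor

theorem isLocalization_inverseImage_isomorphisms (W : MorphismProperty C) [L.IsLocalization W] :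
    L.IsLocalization ((MorphismProperty.isomorphisms D).inverseImage L) :=
  isLocalization_of_le_of_isInvertedBy L W (Localization.inverts L W) fun _ _ _ hf ↦ hf

theorem isInvertedBy_inverseImage_isomorphisms {W : MorphismProperty C} [L.IsLocalization W]
    {E : Type*} [Category* E] {F : C ⥤ E} (hF : W.IsInvertedBy F) :
    ((MorphismProperty.isomorphisms D).inverseImage L).IsInvertedBy F := by
  rw [← MorphismProperty.IsInvertedBy.iff_of_iso _ (Localization.fac F hF L)]
  exact .of_comp _ L (fun _ _ _ hf ↦ hf) (Localization.lift F hF L)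

end Saturation

section Existence

variable {C D : Type*} [Category* C] [Category* D] [MonoidalCategory C] (L : C ⥤ D)
  {W : MorphismProperty C}

theorem isMonoidal_inverseImage_isomorphisms [L.IsLocalization W]
    (hW : ∀ Z : C, W.IsInvertedBy (tensorRight Z ⋙ L) ∧ W.IsInvertedBy (tensorLeft Z ⋙ L)) :
    ((MorphismProperty.isomorphisms D).inverseImage L).IsMonoidal where
  whiskerLeft Z _ _ w hw := isInvertedBy_inverseImage_isomorphisms L (hW Z).2 w hw
  whiskerRight w hw Z := isInvertedBy_inverseImage_isomorphisms L (hW Z).1 w hw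

theorem exists_monoidal_of_isInvertedBy [L.IsLocalization W]
    (hW : ∀ Z : C, W.IsInvertedBy (tensorRight Z ⋙ L) ∧ W.IsInvertedBy (tensorLeft Z ⋙ L)) :
    ∃ m : MonoidalCategory D, Nonempty (@Functor.Monoidal C _ _ D _ m L) := by
  let W' := (MorphismProperty.isomorphisms D).inverseImage L
  have : W'.IsMonoidal := isMonoidal_inverseImage_isomorphisms L hW
  have : L.IsLocalization W' := isLocalization_inverseImage_isomorphisms L W
  let unitIso : L.obj (𝟙_ C) ≅ L.obj (𝟙_ C) := Iso.refl _
  exact ⟨(inferInstance : MonoidalCategory (LocalizedMonoidal L W' unitIso)),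
    ⟨(inferInstance : (Localization.Monoidal.toMonoidalCategory L W' unitIso).Monoidal)⟩⟩

theorem isInvertedBy_tensor_comp [MonoidalCategory D] [L.Monoidal] (hW : W.IsInvertedBy L)
    (Z : C) : W.IsInvertedBy (tensorRight Z ⋙ L) ∧ W.IsInvertedBy (tensorLeft Z ⋙ L) :=
  ⟨(MorphismProperty.IsInvertedBy.iff_of_iso W (Functor.Monoidal.commTensorRight L Z)).1
      (.of_comp W L hW (tensorRight (L.obj Z))),
    (MorphismProperty.IsInvertedBy.iff_of_iso W (Functor.Monoidal.commTensorLeft L Z)).1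
      (.of_comp W L hW (tensorLeft (L.obj Z)))⟩

end Existence

/-- The monoidal structure on a functor `F` out of a monoidal localization `L` at `W` that is
induced by a monoidal structure on `G ≅ L ⋙ F`. It is built from the class of all morphisms
inverted by `L`, so it does not depend on the choice of `W`. -/
noncomputable abbrev functorMonoidalOfCompIso {C D E : Type*} [Category* C] [Category* D]
    [Category* E] [MonoidalCategory C] [MonoidalCategory D] [MonoidalCategory E]
    (L : C ⥤ D) (W : MorphismProperty C) [L.IsLocalization W] [L.Monoidal]
    (F : D ⥤ E) {G : C ⥤ E} [G.Monoidal] (e : L ⋙ F ≅ G) : F.Monoidal :=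
  let W' := (MorphismProperty.isomorphisms D).inverseImage L
  have : L.IsLocalization W' := isLocalization_inverseImage_isomorphisms L W
  letI : Localization.Lifting L W' G F := ⟨e⟩
  Localization.Monoidal.functorMonoidalOfComp L W' F G

theorem localization_monoidal_exists_unique_general {C : Type*} {D : Type*} [Category* C]
    [Category* D] [MonoidalCategory C] (W : MorphismProperty C) (L : C ⥤ D)
    [L.IsLocalization W] :
    ((∃ m : MonoidalCategory D, Nonempty (@Functor.Monoidal C _ _ D _ m L)) ↔
      ∀ Z : C, W.IsInvertedBy (tensorRight Z ⋙ L) ∧ W.IsInvertedBy (tensorLeft Z ⋙ L)) ∧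
      ∀ (m₁ m₂ : MonoidalCategory D),
        @Functor.Monoidal C _ _ D _ m₁ L → @Functor.Monoidal C _ _ D _ m₂ L →
          Nonempty (@Functor.Monoidal D _ m₁ D _ m₂ (𝟭 D)) := by
  have hL : W.IsInvertedBy L := Localization.inverts L W
  refine ⟨⟨?_, exists_monoidal_of_isInvertedBy L⟩, fun m₁ m₂ h₁ h₂ ↦ ?_⟩
  · rintro ⟨m, ⟨h⟩⟩
    exact isInvertedBy_tensor_comp L hL
  · exact ⟨@functorMonoidalOfCompIso C D D _ _ _ _ m₁ m₂ L W _ h₁ (𝟭 D) L h₂ L.rightUnitor⟩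

/-- If `L : C ⥤ D` is a localization at `W` and `W` is stable under whiskering by any
object, then `D` inherits a monoidal structure making `L` monoidal, uniquely up to a
monoidal equivalence compatible with `L`. -/
theorem localization_monoidal_exists_unique {C : Type*} {D : Type*} [Category C]
    [Category D] [MonoidalCategory C] (W : MorphismProperty C)
    (hW : ∀ {X Y : C} (w : X ⟶ Y), W w → ∀ Z : C, W (w ▷ Z) ∧ W (Z ◁ w))
    (L : C ⥤ D) [L.IsLocalization W] :
    (∃ m : MonoidalCategory D, Nonempty (@Functor.Monoidal C _ _ D _ m L)) ∧
      ∀ (m₁ m₂ : MonoidalCategory D),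
        @Functor.Monoidal C _ _ D _ m₁ L → @Functor.Monoidal C _ _ D _ m₂ L →
          ∃ e : D ≌ D,
            Nonempty (@Functor.Monoidal D _ m₁ D _ m₂ e.functor) ∧
              Nonempty (L ⋙ e.functor ≅ L) := by
  obtain ⟨hexists, hunique⟩ := localization_monoidal_exists_unique_general W L
  have hL : W.IsInvertedBy L := Localization.inverts L W
  exact ⟨hexists.2 fun Z ↦ ⟨fun _ _ w hw ↦ hL _ (hW w hw Z).1, fun _ _ w hw ↦ hL _ (hW w hw Z).2⟩,
    fun m₁ m₂ h₁ h₂ ↦ ⟨.refl, hunique m₁ m₂ h₁ h₂, ⟨L.rightUnitor⟩⟩⟩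
end

section
/- Let C be a cocomplete symmetric monoidal closed category, S a set of objects of C, and let L : C → C_S be the reflective localization at the class of S-local equivalences. If for every S-local equivalence f and every object Z the morphism f ⊗ id_Z is again an S-local equivalence, then C_S inherits a symmetric monoidal structure with L strong symmetric monoidal, given by X ⊗_S Y := L(X ⊗ Y). -/
open CategoryTheory MonoidalCategory Limits

/-!
Write `L` for the reflector of `ι`. It is a localization functor at the local equivalences. These
are stable under tensoring on one side by assumption, hence on both sides by the braiding, so the
localized category carries a symmetric monoidal structure making `L` braided. Its tensor product
is determined by `L X ⊗ L Y ≅ L (X ⊗ Y)` and therefore, as the counits `L (ι X) ⟶ X` are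
isomorphisms, only isomorphic to `L (ι X ⊗ ι Y)`. To obtain an equality, the structure is pulled
back along the identity, regarded as a fully faithful functor to the localized monoidal category,
with these objects as prescribed tensor products; `L` remains braided because braidedness descends
along fully faithful braided functors.
-/

section TensorLift

variable {A D : Type*} [Category* A] [MonoidalCategory A] [Category* D]

/-- Objects of `D` lifting along `F : D ⥤ A` the unit of `A` and the tensor products of objects in
the image of `F`, up to chosen isomorphisms. For `F` fully faithful they underlie a monoidal
structure on `D` in which the tensor product of objects is `tensorObj` on the nose. -/
structure TensorLift (F : D ⥤ A) where
  tensorObj : D → D → D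
  unit : D
  μIso (X Y : D) : F.obj X ⊗ F.obj Y ≅ F.obj (tensorObj X Y)
  εIso : 𝟙_ A ≅ F.obj unit

namespace TensorLift

variable {F : D ⥤ A} [F.Full] [F.Faithful] (T : TensorLift F)

/-- The tensor operations on `D` whose values on morphisms are the unique ones making `T.μIso`
natural and compatible with the associators and unitors. -/
noncomputable abbrev monoidalCategoryStruct : MonoidalCategoryStruct D where
  tensorObj := T.tensorObj
  tensorUnit := T.unit
  whiskerLeft X _ _ f := F.preimage ((T.μIso _ _).inv ≫ F.obj X ◁ F.map f ≫ (T.μIso _ _).hom)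
  whiskerRight f Y := F.preimage ((T.μIso _ _).inv ≫ F.map f ▷ F.obj Y ≫ (T.μIso _ _).hom)
  tensorHom f g := F.preimage ((T.μIso _ _).inv ≫ (F.map f ⊗ₘ F.map g) ≫ (T.μIso _ _).hom)
  associator X Y Z := F.preimageIso
    (((T.μIso _ _).symm ≪≫ ((T.μIso _ _).symm ⊗ᵢ .refl _)) ≪≫
      α_ (F.obj X) (F.obj Y) (F.obj Z) ≪≫ ((.refl _ ⊗ᵢ T.μIso _ _) ≪≫ T.μIso _ _))
  leftUnitor X := F.preimageIso
    (((T.μIso _ _).symm ≪≫ (T.εIso.symm ⊗ᵢ .refl _)) ≪≫ λ_ (F.obj X))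
  rightUnitor X := F.preimageIso
    (((T.μIso _ _).symm ≪≫ (.refl _ ⊗ᵢ T.εIso.symm)) ≪≫ ρ_ (F.obj X))

noncomputable def inducingFunctorData :
    letI := T.monoidalCategoryStruct
    Monoidal.InducingFunctorData F :=
  letI := T.monoidalCategoryStruct
  { μIso := T.μIso
    εIso := T.εIso
    whiskerLeft_eq _ _ _ _ := F.map_preimage _
    whiskerRight_eq _ _ := F.map_preimage _
    tensorHom_eq _ _ := F.map_preimage _
    associator_eq _ _ _ := F.map_preimage _
    leftUnitor_eq _ := F.map_preimage _
    rightUnitor_eq _ := F.map_preimage _ }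

/-- The monoidal structure on `D` pulled back from `A` along the fully faithful functor `F`, with
tensor product and unit prescribed by `T`. -/
noncomputable abbrev monoidalCategory : MonoidalCategory D :=
  letI := T.monoidalCategoryStruct
  Monoidal.induced F T.inducingFunctorData

noncomputable abbrev monoidal :
    letI := T.monoidalCategory
    F.Monoidal :=
  letI := T.monoidalCategoryStruct
  Monoidal.fromInducedMonoidal F T.inducingFunctorData

end TensorLift

end TensorLift

section FullyFaithful

open Functor.LaxMonoidal Functor.OplaxMonoidal Functor.Monoidal

variable {A C D : Type*} [Category* A] [Category* C] [Category* D]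
  [MonoidalCategory A] [MonoidalCategory C] [MonoidalCategory D]

noncomputable abbrev braidedOfFullyFaithful [BraidedCategory A] (F : D ⥤ A) [F.Monoidal] [F.Full]
    [F.Faithful] :
    letI := BraidedCategory.ofFullyFaithful F
    F.Braided :=
  letI := BraidedCategory.ofFullyFaithful F
  { braided X Y := by
      simp +instances [BraidedCategory.ofFullyFaithful, BraidedCategory.ofFaithful] }

variable (L : C ⥤ D) (F : D ⥤ A) [F.Full] [F.Faithful]

noncomputable abbrev coreMonoidalOfComp [F.Monoidal] [(L ⋙ F).Monoidal] : L.CoreMonoidal where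
  εIso := F.preimageIso ((εIso F).symm ≪≫ εIso (L ⋙ F))
  μIso X Y := F.preimageIso ((μIso F _ _).symm ≪≫ μIso (L ⋙ F) X Y)
  μIso_hom_natural_left f X := F.map_injective <| by
    simpa using (δ F _ _ ≫= μ_natural_left (L ⋙ F) f X)
  μIso_hom_natural_right X f := F.map_injective <| by
    simpa using (δ F _ _ ≫= μ_natural_right (L ⋙ F) X f)
  associativity X Y Z := F.map_injective <| by
    simpa [← δ_natural_left_assoc, ← δ_natural_right_assoc] using
      (δ F _ _ ≫= δ F _ _ ▷ _ ≫= Functor.LaxMonoidal.associativity (L ⋙ F) X Y Z)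
  left_unitality X := F.map_injective <| by
    simpa [← δ_natural_left_assoc] using
      (δ F _ _ ≫= η F ▷ _ ≫= Functor.LaxMonoidal.left_unitality (L ⋙ F) X)
  right_unitality X := F.map_injective <| by
    simpa [← δ_natural_right_assoc] using
      (δ F _ _ ≫= _ ◁ η F ≫= Functor.LaxMonoidal.right_unitality (L ⋙ F) X)

noncomputable abbrev braidedOfComp [BraidedCategory A] [BraidedCategory C] [BraidedCategory D]
    [F.Braided] [(L ⋙ F).Braided] : L.Braided where
  toMonoidal := (coreMonoidalOfComp L F).toMonoidal
  braided X Y := F.map_injective <| by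
    simpa [Functor.CoreMonoidal.toLaxMonoidal_μ] using
      (δ F _ _ ≫= Functor.LaxBraided.braided (F := L ⋙ F) X Y)

end FullyFaithful

section Reflection

variable {C D : Type*} [Category* C] [Category* D]

/-- The `S`-local equivalences of the reflective localization with inclusion `ι`: the morphisms
orthogonal to every object in the image of `ι`. -/
abbrev localEquivalences (ι : D ⥤ C) : MorphismProperty C :=
  ObjectProperty.isLocal (· ∈ Set.range ι.obj)

lemma localEquivalences_iff (ι : D ⥤ C) {X Y : C} (f : X ⟶ Y) :
    localEquivalences ι f ↔ ∀ Z : D, Function.Bijective fun g : Y ⟶ ι.obj Z => f ≫ g :=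
  Set.forall_mem_range

instance (ι : D ⥤ C) [Reflective ι] :
    (reflector ι).IsLocalization (localEquivalences ι) :=
  ObjectProperty.isLocalization_isLocal (reflectorAdjunction ι)

variable [MonoidalCategory C]

lemma isMonoidal_of_whiskerRight [BraidedCategory C] (W : MorphismProperty C) [W.IsMultiplicative]
    [W.RespectsIso] (hW : ∀ {X Y : C} (f : X ⟶ Y), W f → ∀ Z : C, W (f ▷ Z)) : W.IsMonoidal where
  whiskerLeft X Y₁ Y₂ g hg :=
    (W.arrow_mk_iso_iff (Arrow.isoMk (β_ X Y₁) (β_ X Y₂))).2 (hW g hg X)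
  whiskerRight := hW

variable (ι : D ⥤ C) [Reflective ι] [(localEquivalences ι).IsMonoidal]

/-- The category `D`, as the target of the localization functor `reflector ι`, with the monoidal
structure provided by localization of monoidal categories. -/
abbrev ReflectiveLocalization : Type _ :=
  LocalizedMonoidal (reflector ι) (localEquivalences ι) (Iso.refl _)

/-- The identity functor of `D`, relating `D` to the synonym carrying the localized monoidal
structure. -/
def toReflectiveLocalization : D ⥤ ReflectiveLocalization ι := 𝟭 D

instance : (toReflectiveLocalization ι).Full := inferInstanceAs (𝟭 D).Full

instance : (toReflectiveLocalization ι).Faithful := inferInstanceAs (𝟭 D).Faithful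

/-- The tensor product `X ⊗_S Y = L (X ⊗ Y)`, with its comparison to the localized one. -/
noncomputable def reflectedTensor : TensorLift (toReflectiveLocalization ι) where
  tensorObj X Y := (reflector ι).obj (ι.obj X ⊗ ι.obj Y)
  unit := (reflector ι).obj (𝟙_ C)
  μIso X Y :=
    let c : 𝟭 D ≅ ι ⋙ reflector ι := (asIso (reflectorAdjunction ι).counit).symm
    ((toReflectiveLocalization ι).mapIso (c.app X) ⊗ᵢ
      (toReflectiveLocalization ι).mapIso (c.app Y)) ≪≫
      Localization.Monoidal.μ (reflector ι) _ (Iso.refl _) (ι.obj X) (ι.obj Y)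
  εIso := Iso.refl _

noncomputable instance [BraidedCategory C] :
    (reflector ι ⋙ toReflectiveLocalization ι).Braided :=
  inferInstanceAs (Localization.Monoidal.toMonoidalCategory (reflector ι) _ _).Braided

end Reflection

theorem reflective_localization_symmetricMonoidal_general {C : Type*} {D : Type*} [Category C]
    [Category D] [MonoidalCategory C] [SymmetricCategory C] (ι : D ⥤ C) [Reflective ι]
    (hstable : ∀ {X Y : C} (f : X ⟶ Y),
      (∀ Z : D, Function.Bijective fun g : Y ⟶ ι.obj Z => f ≫ g) →
        ∀ Z : C, ∀ Z' : D,
          Function.Bijective fun g : Y ⊗ Z ⟶ ι.obj Z' => (f ▷ Z) ≫ g) :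
    ∃ (m : MonoidalCategory D) (s : @SymmetricCategory D _ m),
      Nonempty (@Functor.Braided C _ _ _ D _ m s.toBraidedCategory (reflector ι)) ∧
        ∀ X Y : D,
          @MonoidalCategoryStruct.tensorObj D _ m.toMonoidalCategoryStruct X Y =
            (reflector ι).obj (ι.obj X ⊗ ι.obj Y) := by
  have : (localEquivalences ι).IsMonoidal := isMonoidal_of_whiskerRight _ fun f hf Z =>
    (localEquivalences_iff ι _).2 (hstable f ((localEquivalences_iff ι f).1 hf) Z)
  let F := toReflectiveLocalization ι
  let := (reflectedTensor ι).monoidalCategory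
  let : F.Monoidal := (reflectedTensor ι).monoidal
  let : SymmetricCategory D := SymmetricCategory.ofFullyFaithful F
  let : F.Braided := braidedOfFullyFaithful F
  exact ⟨inferInstance, inferInstance, ⟨braidedOfComp (reflector ι) F⟩, fun _ _ => rfl⟩

/-- A reflective localization of a cocomplete closed symmetric monoidal category at a class
of local equivalences stable under tensoring inherits a symmetric monoidal structure with
tensor product `X ⊗_S Y = L(X ⊗ Y)` and `L` strong symmetric monoidal. -/
theorem reflective_localization_symmetricMonoidal {C : Type*} {D : Type*} [Category C]
    [Category D] [MonoidalCategory C] [SymmetricCategory C] [MonoidalClosed C]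
    [HasColimits C] (ι : D ⥤ C) [Reflective ι]
    (hstable : ∀ {X Y : C} (f : X ⟶ Y),
      (∀ Z : D, Function.Bijective fun g : Y ⟶ ι.obj Z => f ≫ g) →
        ∀ Z : C, ∀ Z' : D,
          Function.Bijective fun g : Y ⊗ Z ⟶ ι.obj Z' => (f ▷ Z) ≫ g) :
    ∃ (m : MonoidalCategory D) (s : @SymmetricCategory D _ m),
      Nonempty (@Functor.Braided C _ _ _ D _ m s.toBraidedCategory (reflector ι)) ∧
        ∀ X Y : D,
          @MonoidalCategoryStruct.tensorObj D _ m.toMonoidalCategoryStruct X Y =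
            (reflector ι).obj (ι.obj X ⊗ ι.obj Y) :=
  reflective_localization_symmetricMonoidal_general ι hstable
end
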